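/- arXiv:2604.05245 — 2 statements merged into one kernel-verified Lean document; each statement's English description precedes it below -/
import Mathlib

section
/- Assume 0 < γ ≤ 1 (and γ < p), let u be a local minimizer of J on Ω, and let Ω' ⊆ Ω with dist(Ω', ∂Ω) > 0. Assume the growth property: there exist ρ₀ > 0 and C₂ > 0 such that |u(x)| ≤ C₂ · dist(x, Γ_0(u))^{1+τ} for every x ∈ Ω with dist(x, Γ_0(u)) < ρ₀. Then the N-dimensional Lebesgue measure of the full free boundary Γ(u) ∩ Ω' is zero: 𝓛^N(Γ(u) ∩ Ω') = 0. -/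
open MeasureTheory Metric Set
open scoped InnerProductSpace

/-- The Alt–Phillips potential `F_γ(t) = λ₊ (t₊)^γ + λ₋ (t₋)^γ`. -/
noncomputable def Fgam (γ lp lm : ℝ) (t : ℝ) : ℝ :=
  lp * (max t 0) ^ γ + lm * (max (-t) 0) ^ γ

/-- `u` is a `C¹(Ω)` function with `∫_Ω ‖∇u‖^p < ∞` which is a local minimizer of the
functional with density `‖∇v‖^p/p + F(v)`, with respect to Lipschitz competitors on
balls compactly contained in `Ω` agreeing with `u` on the boundary sphere. -/
def APLocMin (N : ℕ) (p : ℝ) (F : ℝ → ℝ) (Ω : Set (EuclideanSpace ℝ (Fin N)))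
    (u : EuclideanSpace ℝ (Fin N) → ℝ) : Prop :=
  (∀ x ∈ Ω, DifferentiableAt ℝ u x) ∧
  ContinuousOn (fun x => gradient u x) Ω ∧
  IntegrableOn (fun x => ‖gradient u x‖ ^ p) Ω volume ∧
  ∀ (z : EuclideanSpace ℝ (Fin N)) (r : ℝ), 0 < r → closure (Metric.ball z r) ⊆ Ω →
    ∀ (v : EuclideanSpace ℝ (Fin N) → ℝ) (K : NNReal),
      LipschitzOnWith K v (closure (Metric.ball z r)) →
      Set.EqOn v u (Metric.sphere z r) →
      (∫ x in Metric.ball z r, (‖gradient u x‖ ^ p / p + F (u x))) ≤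
        ∫ x in Metric.ball z r, (‖gradient v x‖ ^ p / p + F (v x))

/-- The free boundary `Γ(u) = (∂{u>0} ∪ ∂{u<0}) ∩ Ω`. -/
def apFB (N : ℕ) (Ω : Set (EuclideanSpace ℝ (Fin N)))
    (u : EuclideanSpace ℝ (Fin N) → ℝ) : Set (EuclideanSpace ℝ (Fin N)) :=
  (frontier {x ∈ Ω | 0 < u x} ∪ frontier {x ∈ Ω | u x < 0}) ∩ Ω

/-- The zero-gradient part of the free boundary `Γ₀(u) = Γ(u) ∩ {∇u = 0}`. -/
def apFB0 (N : ℕ) (Ω : Set (EuclideanSpace ℝ (Fin N)))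
    (u : EuclideanSpace ℝ (Fin N) → ℝ) : Set (EuclideanSpace ℝ (Fin N)) :=
  apFB N Ω u ∩ {x | gradient u x = 0}


lemma porous_null {N : ℕ} (S : Set (EuclideanSpace ℝ (Fin N)))
    (h : ∀ x ∈ S, ∃ η : ℝ, 0 < η ∧ ∀ ε : ℝ, 0 < ε → ∃ r, 0 < r ∧ r < ε ∧
      ∃ y, dist y x ≤ 2 * r ∧ Disjoint (ball y (η * r)) S) : volume S = 0 := by
  have hae := Besicovitch.ae_tendsto_measure_inter_div (volume : Measure (EuclideanSpace ℝ (Fin N))) S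
  rw [ae_iff] at hae
  refine le_antisymm ?_ zero_le
  rw [← hae]
  refine le_trans (measure_mono ?_) (Measure.le_restrict_apply _ _)
  intro x hx
  refine ⟨?_, hx⟩
  simp only [mem_ofPred_eq]
  intro ht
  obtain ⟨η', hη', h1⟩ := h x hx
  set η := min η' 1 with hη
  have hη0 : 0 < η := lt_min hη' one_pos
  have hη1 : η ≤ 1 := min_le_right _ _
  set θ : ℝ := 1 - (η / 3) ^ N with hθ
  have hp1 : (η / 3) ^ N ≤ 1 := pow_le_one₀ (by positivity) (by linarith)
  have hp0 : 0 < (η / 3) ^ N := by positivity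
  have hlt : ENNReal.ofReal θ < 1 := by
    rw [← ENNReal.ofReal_one]
    exact (ENNReal.ofReal_lt_ofReal_iff one_pos).2 (by linarith)
  have hev := ht.eventually (lt_mem_nhds hlt)
  rw [eventually_nhdsWithin_iff, Metric.eventually_nhds_iff] at hev
  obtain ⟨ε, hε, hev⟩ := hev
  obtain ⟨r, hr0, hrε, y, hy, hdis⟩ := h1 (ε / 3) (by positivity)
  have h3 := hev (y := 3 * r) (by rw [Real.dist_eq, sub_zero, abs_of_pos (by positivity)]; linarith)
    (by simpa using hr0)
  have hsub : ball y (η * r) ⊆ closedBall x (3 * r) := by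
    refine (ball_subset_closedBall).trans (closedBall_subset_closedBall' ?_)
    nlinarith
  have hdis' : Disjoint (S ∩ closedBall x (3 * r)) (ball y (η * r)) := by
    refine (hdis.mono_left (ball_subset_ball ?_)).symm.mono_left inter_subset_left
    exact mul_le_mul_of_nonneg_right (min_le_left _ _) hr0.le
  have hsum := measure_union (μ := volume) hdis' measurableSet_ball
  have hle : volume (S ∩ closedBall x (3 * r)) + volume (ball y (η * r)) ≤
      volume (closedBall x (3 * r)) := by
    rw [← hsum]
    exact measure_mono (union_subset inter_subset_right hsub)
  have hb : volume (closedBall x (3 * r)) ≠ 0 :=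
    (measure_closedBall_pos _ _ (by positivity)).ne'
  have hb' : volume (closedBall x (3 * r)) ≠ ⊤ := measure_closedBall_lt_top.ne
  rw [ENNReal.lt_div_iff_mul_lt (Or.inl hb) (Or.inl hb')] at h3
  have h4 : volume (ball y (η * r)) = ENNReal.ofReal ((η/3)^N) * volume (closedBall x (3*r)) := by
    rw [Measure.addHaar_ball_of_pos _ _ (by positivity), Measure.addHaar_closedBall _ _ (by positivity),
      ← mul_assoc, ← ENNReal.ofReal_mul (by positivity)]
    simp only [finrank_euclideanSpace, Fintype.card_fin]
    rw [← mul_pow]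
    congr 3
    field_simp
  have h5 : volume (closedBall x (3*r)) = ENNReal.ofReal θ * volume (closedBall x (3*r)) +
      ENNReal.ofReal ((η/3)^N) * volume (closedBall x (3*r)) := by
    rw [← add_mul, ← ENNReal.ofReal_add (by linarith) (by positivity)]
    simp [hθ]
  have h6 := ENNReal.add_lt_add_right (a := volume (ball y (η * r)))  (ne_top_of_le_ne_top hb' (measure_mono hsub)) h3
  rw [h4, ← h5, ← h4] at h6
  exact absurd hle (not_le.2 h6)
lemma ap_norm_gradient {N : ℕ} (u : EuclideanSpace ℝ (Fin N) → ℝ) (x) :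
    ‖gradient u x‖ = ‖fderiv ℝ u x‖ := by
  simp [gradient]

lemma ap_touch {N : ℕ} {u v : EuclideanSpace ℝ (Fin N) → ℝ} {y : EuclideanSpace ℝ (Fin N)}
    (hu : DifferentiableAt ℝ u y) (hle : ∀ᶠ x in nhds y, v x ≤ u x) (he : v y = u y) :
    ‖gradient v y‖ ≤ ‖gradient u y‖ := by
  rw [ap_norm_gradient, ap_norm_gradient]
  by_cases hv : DifferentiableAt ℝ v y
  · have hm : IsLocalMin (fun x => u x - v x) y := by
      filter_upwards [hle] with x hx
      linarith
    have := hm.fderiv_eq_zero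
    rw [fderiv_fun_sub hu hv, sub_eq_zero] at this
    rw [this]
  · rw [fderiv_zero_of_not_differentiableAt hv]; simp

lemma ap_lineDeriv_zero {N : ℕ} {w : EuclideanSpace ℝ (Fin N) → ℝ} (hw : ∀ y, 0 ≤ w y)
    {y : EuclideanSpace ℝ (Fin N)} (h : w y = 0) (e) : lineDeriv ℝ w y e = 0 := by
  unfold lineDeriv
  apply IsLocalMin.deriv_eq_zero
  refine Filter.Eventually.of_forall fun t => ?_
  simpa [h] using hw _

lemma ap_div {N : ℕ} {w : EuclideanSpace ℝ (Fin N) → ℝ} {C : NNReal} (hL : LipschitzWith C w)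
    (hw : ∀ y, 0 ≤ w y) (z : EuclideanSpace ℝ (Fin N)) (r : ℝ) (hs : ∀ y, y ∉ ball z r → w y = 0) :
    IntegrableOn (fun y => ∑ i, (y i - z i) * lineDeriv ℝ w y (EuclideanSpace.single i 1)) (ball z r) ∧
    ∫ y in ball z r, ∑ i, (y i - z i) * lineDeriv ℝ w y (EuclideanSpace.single i 1) =
      - (N * ∫ y in ball z r, w y) := by
  have hint : ∀ i : Fin N, IntegrableOn (fun y : EuclideanSpace ℝ (Fin N) =>
      (y i - z i) * lineDeriv ℝ w y (EuclideanSpace.single i 1)) (ball z r) := by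
    intro i
    refine IntegrableOn.of_bound measure_ball_lt_top ?_ (r * C) ?_
    · refine Measurable.aestronglyMeasurable ?_
      refine Measurable.mul (by fun_prop) ?_
      exact measurable_lineDeriv hL.continuous
    · refine (ae_restrict_iff' measurableSet_ball).2 (Filter.Eventually.of_forall fun y hy => ?_)
      rw [norm_mul]
      refine mul_le_mul ?_ ?_ (norm_nonneg _) (le_trans (norm_nonneg _) (mem_ball_iff_norm.1 hy).le)
      · refine le_trans ?_ (mem_ball_iff_norm.1 hy).le
        exact PiLp.norm_apply_le (y - z) i
      · refine (norm_lineDeriv_le_of_lipschitz ℝ hL).trans ?_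
        simp
  refine ⟨integrable_finsetSum _ fun i _ => hint i, ?_⟩
  rw [integral_finsetSum _ fun i _ => hint i]
  have hcs : HasCompactSupport w := by
    refine HasCompactSupport.intro (isCompact_closedBall z r) fun x hx => hs x ?_
    exact fun h => hx (ball_subset_closedBall h)
  have key : ∀ i : Fin N, ∫ y in ball z r, (y i - z i) * lineDeriv ℝ w y (EuclideanSpace.single i 1)
      = - ∫ y in ball z r, w y := by
    intro i
    have hf : LipschitzWith 1 (fun y : EuclideanSpace ℝ (Fin N) => y i - z i) := by
      refine LipschitzWith.of_dist_le_mul fun a b => ?_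
      rw [Real.dist_eq, dist_eq_norm]
      have := PiLp.norm_apply_le (a - b) i
      simpa using this
    have h1 := LipschitzWith.integral_lineDeriv_mul_eq (μ := volume) hf hL hcs (EuclideanSpace.single i 1)
    rw [setIntegral_eq_integral_of_forall_compl_eq_zero, setIntegral_eq_integral_of_forall_compl_eq_zero]
    · have h2 : ∀ x : EuclideanSpace ℝ (Fin N), lineDeriv ℝ (fun y : EuclideanSpace ℝ (Fin N) => y i - z i) x
          (EuclideanSpace.single i 1) = 1 := by
        intro x
        unfold lineDeriv
        simp
      simp only [h2, one_mul, lineDeriv_neg] at h1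
      rw [h1, ← integral_neg]
      congr 1
      ext x
      ring
    · exact hs
    · intro x hx
      rw [ap_lineDeriv_zero hw (hs x hx), mul_zero]
  simp [key]

lemma ap_young {N : ℕ} {p q B : ℝ} (hpq : p.HolderConjugate q) (hB : 0 < B)
    (g x : EuclideanSpace ℝ (Fin N)) :
    B ^ (p - 1) * (⟪g, x⟫_ℝ - B * ‖x‖ ^ (q - 2) * ‖x‖ ^ 2) ≤
      ‖g‖ ^ p / p - ‖(B * ‖x‖ ^ (q - 2)) • x‖ ^ p / p := by
  have hp := hpq.lt
  have hpne : p ≠ 0 := by linarith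
  by_cases hx : x = 0
  · subst hx
    simp only [inner_zero_right, norm_zero, smul_zero]
    rw [Real.zero_rpow hpne]
    simp only [ne_eq, OfNat.ofNat_ne_zero, not_false_eq_true, zero_pow, mul_zero, sub_zero,
      zero_div]
    positivity
  have hs : 0 < ‖x‖ := norm_pos_iff.2 hx
  set s := ‖x‖ with hsdef
  have h1 : ⟪g, x⟫_ℝ ≤ ‖g‖ * s := real_inner_le_norm g x
  have h2 := Real.young_inequality_of_nonneg (norm_nonneg g) (by positivity : 0 ≤ B ^ (p-1) * s) hpq
  have e1 : (B ^ (p - 1) * s) ^ q = B ^ p * s ^ q := by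
    rw [Real.mul_rpow (by positivity) hs.le, ← Real.rpow_mul hB.le, hpq.sub_one_mul_conj]
  have e2 : ‖(B * s ^ (q - 2)) • x‖ ^ p = B ^ p * s ^ q := by
    rw [norm_smul, Real.norm_of_nonneg (by positivity), ← hsdef, mul_assoc, ← Real.rpow_add_one hs.ne',
      Real.mul_rpow hB.le (by positivity), ← Real.rpow_mul hs.le]
    congr 2
    have := hpq.symm.sub_one_mul_conj
    linarith
  have e3 : B ^ (p - 1) * (B * s ^ (q - 2) * s ^ 2) = B ^ p * s ^ q := by
    have a1 : B ^ p = B ^ (p - 1) * B := by rw [← Real.rpow_add_one hB.ne']; simp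
    have a2 : s ^ q = s ^ (q - 2) * s ^ 2 := by
      rw [← Real.rpow_natCast s 2, ← Real.rpow_add hs]; simp
    rw [a1, a2]; ring
  have e4 : B ^ p * s ^ q / p + B ^ p * s ^ q / q = B ^ p * s ^ q := by
    have := hpq.inv_add_inv_eq_one
    rw [div_eq_mul_inv, div_eq_mul_inv, ← mul_add, this, mul_one]
  have h3 : B ^ (p-1) * ⟪g, x⟫_ℝ ≤ ‖g‖ * (B ^ (p-1) * s) := by
    have := mul_le_mul_of_nonneg_left h1 (by positivity : 0 ≤ B ^ (p-1))
    linarith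
  rw [mul_sub, e3, e2]
  rw [e1] at h2
  linarith

lemma ap_F {γ lp lm a b M : ℝ} (hγ0 : 0 < γ) (hγ1 : γ ≤ 1) (hlp : 0 < lp) (hb : 0 ≤ b) (hab : b < a)
    (haM : a ≤ M) : lp * γ * M ^ (γ - 1) * (a - b) ≤ Fgam γ lp lm a - Fgam γ lp lm b := by
  have ha : 0 < a := by linarith
  unfold Fgam
  rw [max_eq_left hb, max_eq_left ha.le, max_eq_right (by linarith : -a ≤ 0),
    max_eq_right (by linarith : -b ≤ 0)]
  have h1 := rpow_one_add_le_one_add_mul_self (s := b / a - 1) (p := γ) (by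
    have : 0 ≤ b / a := by positivity
    linarith) hγ0.le hγ1
  rw [add_sub_cancel, Real.div_rpow hb ha.le, div_le_iff₀ (by positivity)] at h1
  have h2 : a ^ γ = a ^ (γ - 1) * a := by rw [← Real.rpow_add_one ha.ne']; simp
  have h3 : M ^ (γ - 1) ≤ a ^ (γ - 1) := Real.rpow_le_rpow_of_nonpos ha haM (by linarith)
  have h4 : b ^ γ ≤ a ^ γ + γ * (a ^ (γ - 1)) * (b - a) := by
    refine h1.trans (le_of_eq ?_)
    rw [h2]; field_simp
  have h5 : γ * M ^ (γ - 1) * (a - b) ≤ γ * a ^ (γ - 1) * (a - b) := by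
    gcongr
  have h6 : γ * M ^ (γ - 1) * (a - b) ≤ a ^ γ - b ^ γ := by linarith
  nlinarith [mul_le_mul_of_nonneg_left h6 hlp.le]

lemma ap_const {n p q γ lp M r : ℝ} (hpq : p.HolderConjugate q) (hM : 0 < M)
    (hr : 0 < r) (h : n * q ^ (p - 1) * M ^ (p - γ) < lp * γ * r ^ p) :
    n * (M / r ^ q * q) ^ (p - 1) < lp * γ * M ^ (γ - 1) := by
  have hq := hpq.symm.pos
  have e : (M / r ^ q * q) ^ (p - 1) = q ^ (p - 1) * (M ^ (p - γ) * M ^ (γ - 1)) / r ^ p := by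
    rw [Real.mul_rpow (by positivity) hq.le, Real.div_rpow hM.le (by positivity), ← Real.rpow_mul hr.le,
      ← Real.rpow_add hM, mul_comm q, hpq.sub_one_mul_conj]
    rw [show p - γ + (γ - 1) = p - 1 by ring]
    ring
  have hrp : 0 < r ^ p := by positivity
  have hMp : 0 < M ^ (γ - 1) := by positivity
  rw [e, ← mul_div_assoc, div_lt_iff₀ hrp]
  have := mul_lt_mul_of_pos_right h hMp
  linarith

lemma ap_phi_lip {N : ℕ} {q : ℝ} (hq : 1 < q) {r : ℝ} (hr : 0 < r) {A : ℝ} (hA : 0 < A)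
    (z : EuclideanSpace ℝ (Fin N)) :
    ∃ K, LipschitzWith K (fun y => A * (min ‖y - z‖ r) ^ q) := by
  have h1 : LipschitzOnWith (Real.toNNReal (A * (q * r ^ (q - 1)))) (fun t : ℝ => A * t ^ q) (Icc 0 r) := by
    refine (convex_Icc 0 r).lipschitzOnWith_of_nnnorm_hasDerivWithin_le
      (f' := fun t => A * (q * t ^ (q - 1))) ?_ ?_
    · intro t ht
      exact ((Real.hasDerivAt_rpow_const (Or.inr hq.le)).const_mul A).hasDerivWithinAt
    · intro t ht
      rw [← NNReal.coe_le_coe]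
      rw [coe_nnnorm, Real.coe_toNNReal _ (by positivity)]
      have := ht.1
      rw [Real.norm_of_nonneg (by positivity)]
      have := Real.rpow_le_rpow ht.1 ht.2 (by linarith : 0 ≤ q - 1)
      gcongr
  have h2 : LipschitzWith 1 (fun y : EuclideanSpace ℝ (Fin N) => min ‖y - z‖ r) := by
    refine LipschitzWith.min_const ?_ r
    refine LipschitzWith.of_dist_le_mul fun a b => ?_
    rw [Real.dist_eq, dist_eq_norm]
    simpa using abs_norm_sub_norm_le (a - z) (b - z)
  refine ⟨_, lipschitzOnWith_univ.1 (h1.comp (lipschitzOnWith_univ.2 h2) ?_)⟩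
  intro y _
  exact ⟨le_min (norm_nonneg _) hr.le, min_le_right _ _⟩

lemma ap_F_cont {γ lp lm : ℝ} (hγ0 : 0 < γ) : Continuous (Fgam γ lp lm) := by
  unfold Fgam
  refine Continuous.add (continuous_const.mul ?_) (continuous_const.mul ?_)
  · exact Continuous.rpow_const (by fun_prop) fun _ => Or.inr hγ0.le
  · exact Continuous.rpow_const (by fun_prop) fun _ => Or.inr hγ0.le

lemma ap_core {N : ℕ} {p q γ lp lm : ℝ} (hpq : p.HolderConjugate q) (hγ0 : 0 < γ) (hγ1 : γ ≤ 1)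
    (hlp : 0 < lp)
    {Ω : Set (EuclideanSpace ℝ (Fin N))}
    {u : EuclideanSpace ℝ (Fin N) → ℝ} (hu : APLocMin N p (Fgam γ lp lm) Ω u)
    {z : EuclideanSpace ℝ (Fin N)} {r M : ℝ} (hr : 0 < r) (hM : 0 < M)
    (hsub : closedBall z r ⊆ Ω) (huM : ∀ y ∈ closedBall z r, u y ≤ M)
    (hc : N * q ^ (p - 1) * M ^ (p - γ) < lp * γ * r ^ p) : u z ≤ 0 := by
  obtain ⟨hdiff, hgc, -, hmin⟩ := hu
  have hp := hpq.lt
  have hq : 1 < q := hpq.symm.lt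
  have hq0 : 0 < q := by linarith
  have hp0 : 0 < p := by linarith
  -- u Lipschitz on the closed ball
  have hcK : ContinuousOn (fun x => gradient u x) (closedBall z r) := hgc.mono hsub
  obtain ⟨K0, hK0⟩ := (isCompact_closedBall z r).exists_bound_of_continuousOn hcK
  have huL : LipschitzOnWith K0.toNNReal u (closedBall z r) := by
    refine Convex.lipschitzOnWith_of_nnnorm_fderiv_le (𝕜 := ℝ) (fun x hx => hdiff x (hsub hx)) ?_
      (convex_closedBall z r)
    intro x hx
    rw [← NNReal.coe_le_coe, coe_nnnorm, ← ap_norm_gradient]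
    exact (hK0 x hx).trans (Real.le_coe_toNNReal _)
  obtain ⟨U0, hU0L, hU0⟩ := huL.extend_real
  set U : EuclideanSpace ℝ (Fin N) → ℝ := fun y => min (U0 y) M with hU
  have hUL : LipschitzWith K0.toNNReal U := hU0L.min_const M
  have hUu : ∀ y ∈ closedBall z r, U y = u y := by
    intro y hy
    simp only [hU]
    rw [← hU0 hy, min_eq_left (huM y hy)]
  have hUM : ∀ y, U y ≤ M := fun y => min_le_right _ _
  set A : ℝ := M / r ^ q with hA
  have hA0 : 0 < A := by positivity
  set P : EuclideanSpace ℝ (Fin N) → ℝ := fun y => A * (min ‖y - z‖ r) ^ q with hP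
  obtain ⟨K1, hPL⟩ := ap_phi_lip hq hr hA0 z
  have hP0 : ∀ y, 0 ≤ P y := fun y => by
    have : 0 ≤ min ‖y - z‖ r := le_min (norm_nonneg _) hr.le
    simp only [hP]; positivity
  have hPout : ∀ y, y ∉ ball z r → P y = M := by
    intro y hy
    have : r ≤ ‖y - z‖ := by rw [← dist_eq_norm]; simpa using hy
    simp only [hP]
    rw [min_eq_right this, hA]
    field_simp
  set v : EuclideanSpace ℝ (Fin N) → ℝ := fun y => min (U y) (P y) with hv
  have hvL : LipschitzWith (max K0.toNNReal K1) v := hUL.min hPL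
  set w : EuclideanSpace ℝ (Fin N) → ℝ := fun y => max (U y - P y) 0 with hw
  have hwL : LipschitzWith (K0.toNNReal + K1) w := (hUL.sub hPL).max_const 0
  have hw0 : ∀ y, 0 ≤ w y := fun y => le_max_right _ _
  have hwout : ∀ y, y ∉ ball z r → w y = 0 := by
    intro y hy
    simp only [hw]
    rw [hPout y hy]
    exact max_eq_right (by linarith [hUM y])
  obtain ⟨hdivI, hdiv⟩ := ap_div hwL hw0 z r hwout
  have hcl : closure (ball z r) = closedBall z r := closure_ball z hr.ne'
  have hE := hmin z r hr (hcl ▸ hsub) v _ (hvL.lipschitzOnWith) (by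
    intro y hy
    have h1 : y ∈ closedBall z r := sphere_subset_closedBall hy
    have h2 : y ∉ ball z r := by
      have := mem_sphere.1 hy
      simp [mem_ball, this]
    simp only [hv]
    rw [hPout y h2, hUu y h1, min_eq_left (huM y h1)])
  have hI1 : IntegrableOn (fun x => ‖gradient u x‖ ^ p / p + Fgam γ lp lm (u x)) (ball z r) := by
    refine IntegrableOn.mono_set ?_ ball_subset_closedBall
    refine ContinuousOn.integrableOn_compact (isCompact_closedBall z r) ?_
    refine ContinuousOn.add ?_ ?_
    · exact (hcK.norm.rpow_const fun _ _ => Or.inr hp0.le).div_const p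
    · exact (ap_F_cont hγ0).comp_continuousOn huL.continuousOn
  have hI2 : IntegrableOn (fun x => ‖gradient v x‖ ^ p / p + Fgam γ lp lm (v x)) (ball z r) := by
    refine Integrable.add ?_ ?_
    · refine IntegrableOn.of_bound measure_ball_lt_top ?_ (((max K0.toNNReal K1 : NNReal) : ℝ) ^ p / p) ?_
      · refine Measurable.aestronglyMeasurable ?_
        simp only [ap_norm_gradient]
        exact (((measurable_fderiv ℝ v).norm).pow_const p).div_const p
      · refine Filter.Eventually.of_forall fun y => ?_
        rw [Real.norm_of_nonneg (by positivity)]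
        gcongr
        rw [ap_norm_gradient]
        exact norm_fderiv_le_of_lipschitz ℝ hvL
    · refine IntegrableOn.mono_set ?_ ball_subset_closedBall
      exact (((ap_F_cont hγ0).comp hvL.continuous).continuousOn).integrableOn_compact
        (isCompact_closedBall z r)
  have hwI : IntegrableOn w (ball z r) :=
    (hwL.continuous.continuousOn.integrableOn_compact (isCompact_closedBall z r)).mono_set
      ball_subset_closedBall
  set c : ℝ := (A * q) ^ (p - 1) with hcdef
  set κ : ℝ := lp * γ * M ^ (γ - 1) with hκ
  have hcκ : N * c < κ := ap_const hpq hM hr hc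
  have hpt : ∀ y ∈ ball z r,
      (‖gradient v y‖ ^ p / p + Fgam γ lp lm (v y)) +
      (c * (∑ i, (y i - z i) * lineDeriv ℝ w y (EuclideanSpace.single i 1)) + κ * w y) ≤
      ‖gradient u y‖ ^ p / p + Fgam γ lp lm (u y) := by
    intro y hy
    have hyc : y ∈ closedBall z r := ball_subset_closedBall hy
    have hnear : ∀ᶠ x in nhds y, U x = u x := by
      filter_upwards [isOpen_ball.mem_nhds hy] with x hx using hUu x (ball_subset_closedBall hx)
    have hPnear : ∀ᶠ x in nhds y, P x = A * ‖x - z‖ ^ q := by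
      filter_upwards [isOpen_ball.mem_nhds hy] with x hx
      simp only [hP]
      rw [min_eq_left (mem_ball_iff_norm.1 hx).le]
    have hud := hdiff y (hsub hyc)
    rcases le_or_gt (U y) (P y) with hle | hgt
    · have hwy : w y = 0 := max_eq_right (by linarith)
      have hvy : v y = u y := by
        simp only [hv]
        rw [min_eq_left hle, hUu y hyc]
      simp only [ap_lineDeriv_zero hw0 hwy, hwy, mul_zero, Finset.sum_const_zero, add_zero, hvy]
      have := ap_touch (v := v) hud (by
        filter_upwards [hnear] with x hx
        rw [← hx]; exact min_le_left _ _) hvy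
      gcongr
    · have hwy : w y = U y - P y := max_eq_left (by linarith)
      have hvy : v y = P y := min_eq_right hgt.le
      have hev : ∀ᶠ x in nhds y, P x < U x :=
        (isOpen_lt hPL.continuous hUL.continuous).mem_nhds hgt
      have hPd : HasFDerivAt (fun x => A * ‖x - z‖ ^ q)
          (A • ((q * ‖y - z‖ ^ (q - 2)) • innerSL ℝ (y - z))) y := by
        have h1 := hasFDerivAt_norm_rpow (y - z) hq
        have h2 := h1.comp y ((hasFDerivAt_id y).sub_const z)
        have h3 := h2.const_mul A
        simpa using! h3
      have hvd : HasFDerivAt v (A • ((q * ‖y - z‖ ^ (q - 2)) • innerSL ℝ (y - z))) y := by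
        refine hPd.congr_of_eventuallyEq ?_
        filter_upwards [hev, hPnear] with x h1 h2
        rw [← h2]; exact min_eq_right h1.le
      have hwd : HasFDerivAt w (fderiv ℝ u y - A • ((q * ‖y - z‖ ^ (q - 2)) • innerSL ℝ (y - z))) y := by
        refine (hud.hasFDerivAt.sub hPd).congr_of_eventuallyEq ?_
        filter_upwards [hev, hPnear, hnear] with x h1 h2 h3
        simp only [hw]
        rw [max_eq_left (by linarith), h3, h2]
        rfl
      have hsum : (∑ i, (y i - z i) * lineDeriv ℝ w y (EuclideanSpace.single i 1)) =
          ⟪gradient u y, y - z⟫_ℝ - (A * q) * ‖y - z‖ ^ (q - 2) * ‖y - z‖ ^ 2 := by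
        have hdec : y - z = ∑ i, (y i - z i) • EuclideanSpace.single i (1 : ℝ) := by
          have := (EuclideanSpace.basisFun (Fin N) ℝ).sum_repr (y - z)
          simpa using this.symm
        have e1 : (fderiv ℝ w y) (y - z) =
            ∑ i, (y i - z i) * lineDeriv ℝ w y (EuclideanSpace.single i 1) := by
          conv_lhs => rw [hdec]
          rw [map_sum]
          refine Finset.sum_congr rfl fun i _ => ?_
          rw [map_smul, hwd.differentiableAt.lineDeriv_eq_fderiv, smul_eq_mul]
        rw [← e1, hwd.fderiv]
        have e2 : ⟪gradient u y, y - z⟫_ℝ = fderiv ℝ u y (y - z) := by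
          simp [gradient]
        rw [e2]
        simp only [_root_.sub_apply, _root_.smul_apply, smul_eq_mul,
          innerSL_apply_apply, real_inner_self_eq_norm_sq]
        ring
      have hgv : ‖gradient v y‖ = ‖((A * q) * ‖y - z‖ ^ (q - 2)) • (y - z)‖ := by
        rw [ap_norm_gradient, hvd.fderiv, norm_smul, norm_smul, innerSL_apply_norm, norm_smul,
          ← mul_assoc, ← norm_mul, mul_assoc A q]
      have hY := ap_young hpq (by positivity : 0 < A * q) (gradient u y) (y - z)
      have hF := ap_F (lm := lm) hγ0 hγ1 hlp (hP0 y) hgt (hUM y)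
      rw [hsum, hgv, hvy, hwy, ← hUu y hyc]
      linarith
  have hI3 : IntegrableOn (fun y => c * (∑ i, (y i - z i) * lineDeriv ℝ w y (EuclideanSpace.single i 1))
      + κ * w y) (ball z r) := (hdivI.const_mul c).add (hwI.const_mul κ)
  have hmono := setIntegral_mono_on (hI2.add hI3) hI1 measurableSet_ball hpt
  simp only [Pi.add_apply] at hmono
  rw [integral_add hI2 hI3, integral_add (hdivI.const_mul c) (hwI.const_mul κ), integral_const_mul,
    integral_const_mul, hdiv] at hmono
  have hwint : ∫ y in ball z r, w y ≤ 0 := by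
    have : (κ - N * c) * ∫ y in ball z r, w y ≤ 0 := by linarith
    by_contra hcon
    push Not at hcon
    have := mul_pos (sub_pos.2 hcκ) hcon
    linarith
  rw [setIntegral_eq_integral_of_forall_compl_eq_zero hwout] at hwint
  have hcs : HasCompactSupport w := by
    refine HasCompactSupport.intro (isCompact_closedBall z r) fun x hx => hwout x ?_
    exact fun h => hx (ball_subset_closedBall h)
  have hwz : w z = 0 := by
    by_contra hne
    have := hwL.continuous.integral_pos_of_hasCompactSupport_nonneg_nonzero (μ := volume) hcs hw0 hne
    linarith
  have h1 : U z - P z ≤ 0 := by rw [← hwz]; exact le_max_left _ _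
  have h2 : P z = 0 := by
    simp only [hP, sub_self, norm_zero]
    rw [min_eq_left hr.le, Real.zero_rpow hq0.ne', mul_zero]
  rw [← hUu z (mem_closedBall_self hr.le)]
  linarith

lemma ap_neg {N : ℕ} {p γ lp lm : ℝ} {Ω : Set (EuclideanSpace ℝ (Fin N))}
    {u : EuclideanSpace ℝ (Fin N) → ℝ} (hu : APLocMin N p (Fgam γ lp lm) Ω u) :
    APLocMin N p (Fgam γ lm lp) Ω (fun x => - u x) := by
  have hg : ∀ (f : EuclideanSpace ℝ (Fin N) → ℝ) x, gradient (fun x => - f x) x = - gradient f x := by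
    intro f x
    simp [gradient]
  have hF : ∀ t, Fgam γ lm lp (-t) = Fgam γ lp lm t := by
    intro t
    simp only [Fgam, neg_neg]
    ring
  obtain ⟨h1, h2, h3, h4⟩ := hu
  refine ⟨fun x hx => (h1 x hx).neg, ?_, ?_, ?_⟩
  · simp only [hg]; exact h2.neg
  · simpa only [hg, norm_neg] using h3
  · intro z r hr hs v K hv he
    have h5 := h4 z r hr hs (fun x => - v x) K hv.neg (fun x hx => by simp [he hx])
    have h6 : ∀ x, Fgam γ lp lm (- v x) = Fgam γ lm lp (v x) := fun x => by
      rw [← hF, neg_neg]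
    simpa only [hg, norm_neg, hF, h6] using h5

lemma ap_fb_ne {N : ℕ} {Ω : Set (EuclideanSpace ℝ (Fin N))}
    {u : EuclideanSpace ℝ (Fin N) → ℝ} {x} (hx : x ∈ apFB N Ω u) {s} (hs : s ∈ nhds x) :
    ∃ y ∈ s, u y ≠ 0 := by
  rcases hx.1 with h | h
  · obtain ⟨y, hy, hy'⟩ := mem_closure_iff_nhds.1 (frontier_subset_closure h) s hs
    exact ⟨y, hy, hy'.2.ne'⟩
  · obtain ⟨y, hy, hy'⟩ := mem_closure_iff_nhds.1 (frontier_subset_closure h) s hs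
    exact ⟨y, hy, hy'.2.ne⟩

lemma ap_fb_zero {N : ℕ} {Ω : Set (EuclideanSpace ℝ (Fin N))} (hΩ : IsOpen Ω)
    {u : EuclideanSpace ℝ (Fin N) → ℝ} (hu : ∀ x ∈ Ω, DifferentiableAt ℝ u x)
    {x} (hx : x ∈ apFB N Ω u) : u x = 0 := by
  have hxΩ := hx.2
  have hc := (hu x hxΩ).continuousAt
  by_contra hne
  rcases lt_or_gt_of_ne hne with h | h
  · have hn : {y ∈ Ω | u y < 0} ∈ nhds x := by
      filter_upwards [hΩ.mem_nhds hxΩ, hc.eventually (gt_mem_nhds h)] with y h1 h2 using ⟨h1, h2⟩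
    rcases hx.1 with h' | h'
    · obtain ⟨y, hy, hy'⟩ := mem_closure_iff_nhds.1 (frontier_subset_closure h') _ hn
      exact lt_asymm hy.2 hy'.2
    · exact h'.2 (mem_interior_iff_mem_nhds.2 hn)
  · have hn : {y ∈ Ω | 0 < u y} ∈ nhds x := by
      filter_upwards [hΩ.mem_nhds hxΩ, hc.eventually (lt_mem_nhds h)] with y h1 h2 using ⟨h1, h2⟩
    rcases hx.1 with h' | h'
    · exact h'.2 (mem_interior_iff_mem_nhds.2 hn)
    · obtain ⟨y, hy, hy'⟩ := mem_closure_iff_nhds.1 (frontier_subset_closure h') _ hn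
      exact lt_asymm hy.2 hy'.2

lemma ap_regular {N : ℕ} {Ω : Set (EuclideanSpace ℝ (Fin N))} (hΩ : IsOpen Ω)
    {u : EuclideanSpace ℝ (Fin N) → ℝ} (hu : ∀ x ∈ Ω, DifferentiableAt ℝ u x) :
    volume (apFB N Ω u ∩ {x | gradient u x ≠ 0}) = 0 := by
  refine porous_null _ ?_
  rintro x ⟨hx, hg⟩
  have hg : gradient u x ≠ 0 := hg
  refine ⟨1/4, by norm_num, fun ε hε => ?_⟩
  have hx0 := ap_fb_zero hΩ hu hx
  set g := gradient u x with hgdef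
  have hgp : 0 < ‖g‖ := norm_pos_iff.2 hg
  have hlo := (hu x hx.2).hasFDerivAt.isLittleO.def (by positivity : 0 < ‖g‖ / 4)
  rw [Metric.eventually_nhds_iff] at hlo
  obtain ⟨δ, hδ, hlo⟩ := hlo
  obtain ⟨r, hr0, hr⟩ := exists_between (lt_min hε (by positivity : 0 < δ / 2))
  have hr1 := hr.trans_le (min_le_left _ _)
  have hr2 := hr.trans_le (min_le_right _ _)
  have hn : ‖(r / ‖g‖) • g‖ = r := by
    rw [norm_smul, Real.norm_of_nonneg (by positivity)]; field_simp
  refine ⟨r, hr0, hr1, x + (r / ‖g‖) • g, ?_, ?_⟩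
  · rw [dist_eq_norm, add_sub_cancel_left, hn]; linarith
  · rw [Set.disjoint_left]
    rintro y hy ⟨hyF, -⟩
    have hy0 := ap_fb_zero hΩ hu hyF
    obtain ⟨e, he⟩ : ∃ e, e = y - (x + (r / ‖g‖) • g) := ⟨_, rfl⟩
    have hyx : y - x = (r / ‖g‖) • g + e := by rw [he]; abel
    have hen : ‖e‖ < 1 / 4 * r := by rw [he]; exact mem_ball_iff_norm.1 hy
    have hd : ‖y - x‖ ≤ 5 / 4 * r := by
      rw [hyx]
      refine (norm_add_le _ _).trans ?_
      rw [hn]; linarith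
    have h1 := hlo (y := y) (by rw [dist_eq_norm]; linarith)
    have h2 : fderiv ℝ u x (y - x) = ⟪g, y - x⟫_ℝ := by simp [hgdef, gradient]
    have h3 : ⟪g, y - x⟫_ℝ = r * ‖g‖ + ⟪g, e⟫_ℝ := by
      rw [hyx, inner_add_right, inner_smul_right, real_inner_self_eq_norm_sq]
      field_simp
    have h4 : - (‖g‖ * ‖e‖) ≤ ⟪g, e⟫_ℝ := by
      have := abs_real_inner_le_norm g e
      exact (abs_le.1 this).1
    rw [hy0, hx0, h2, h3, Real.norm_eq_abs] at h1
    have h5 := (abs_le.1 h1).1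
    have h6 : ‖g‖ * ‖e‖ ≤ ‖g‖ * (1 / 4 * r) := by gcongr
    have h7 : ‖g‖ / 4 * ‖y - x‖ ≤ ‖g‖ / 4 * (5 / 4 * r) := by gcongr
    have h8 : 0 < ‖g‖ * r := by positivity
    linarith

lemma ap_singular {N : ℕ} {p γ lp lm : ℝ}
    (hp : 1 < p) (hγ0 : 0 < γ) (hγ1 : γ ≤ 1) (hγp : γ < p)
    (hlp : 0 < lp) (hlm : 0 < lm)
    {Ω : Set (EuclideanSpace ℝ (Fin N))} (hΩo : IsOpen Ω)
    {u : EuclideanSpace ℝ (Fin N) → ℝ} (hu : APLocMin N p (Fgam γ lp lm) Ω u)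
    {ρ₀ C₂ : ℝ} (hρ₀ : 0 < ρ₀) (hC₂ : 0 < C₂)
    (hgrowth : ∀ x ∈ Ω, Metric.infDist x (apFB0 N Ω u) < ρ₀ →
      |u x| ≤ C₂ * Metric.infDist x (apFB0 N Ω u) ^ (1 + γ / (p - γ))) :
    volume (apFB0 N Ω u) = 0 := by
  have hpq : p.HolderConjugate (p / (p - 1)) := Real.HolderConjugate.conjExponent hp
  set q := p / (p - 1) with hq
  have hq0 : 0 < q := hpq.symm.pos
  have hpg : 0 < p - γ := by linarith
  set m := min lp lm with hm
  have hm0 : 0 < m := lt_min hlp hlm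
  set a : ℝ := N * q ^ (p - 1) * C₂ ^ (p - γ) with ha
  have ha0 : 0 ≤ a := by positivity
  set δ : ℝ := m * γ / (a + 1) with hδ
  have hδ0 : 0 < δ := by positivity
  have haδ : a * δ < m * γ := by
    rw [hδ, ← mul_div_assoc, div_lt_iff₀ (by positivity)]
    nlinarith [mul_pos hm0 hγ0]
  refine porous_null _ ?_
  intro x hx
  set η : ℝ := δ ^ p⁻¹ with hη
  have hη0 : 0 < η := by positivity
  have hηp : η ^ p = δ := Real.rpow_inv_rpow hδ0.le (by linarith)
  refine ⟨η, hη0, ?_⟩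
  by_contra hcon
  push Not at hcon
  obtain ⟨ε, hε, hcon⟩ := hcon
  obtain ⟨R, hR, hRΩ⟩ := Metric.isOpen_iff.1 hΩo x hx.1.2
  obtain ⟨r, hr0, hr⟩ := exists_between
    (lt_min hε (lt_min (by positivity : 0 < R / 2) (by positivity : 0 < ρ₀ / η)))
  have hr1 : r < ε := hr.trans_le (min_le_left _ _)
  have hr2 : r < R / 2 := hr.trans_le ((min_le_right _ _).trans (min_le_left _ _))
  have hr3 : r < ρ₀ / η := hr.trans_le ((min_le_right _ _).trans (min_le_right _ _))
  rw [lt_div_iff₀ hη0] at hr3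
  set M : ℝ := C₂ * (η * r) ^ (1 + γ / (p - γ)) with hM
  have hM0 : 0 < M := by positivity
  have hexp : 0 ≤ 1 + γ / (p - γ) := by positivity
  have hMp : M ^ (p - γ) = C₂ ^ (p - γ) * (δ * r ^ p) := by
    rw [hM, Real.mul_rpow hC₂.le (by positivity), ← Real.rpow_mul (by positivity),
      show (1 + γ / (p - γ)) * (p - γ) = p by field_simp; ring,
      Real.mul_rpow hη0.le hr0.le, hηp]
  have hcst : N * q ^ (p - 1) * M ^ (p - γ) < m * γ * r ^ p := by
    have : 0 < r ^ p := by positivity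
    have h := mul_lt_mul_of_pos_right haδ this
    rw [hMp]
    calc _ = a * δ * r ^ p := by rw [ha]; ring
      _ < _ := h
  have hbd : ∀ y, dist y x ≤ 2 * r → y ∈ Ω ∧ |u y| ≤ M := by
    intro y hy
    have hyΩ : y ∈ Ω := hRΩ (by rw [mem_ball]; linarith)
    refine ⟨hyΩ, ?_⟩
    have h1 := hcon r hr0 hr1 y hy
    obtain ⟨t, ht, htS⟩ := Set.not_disjoint_iff.1 h1
    have h2 : infDist y (apFB0 N Ω u) ≤ η * r := by
      refine (infDist_le_dist_of_mem htS).trans ?_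
      rw [dist_comm]; exact (mem_ball.1 ht).le
    refine (hgrowth y hyΩ (by linarith)).trans ?_
    rw [hM]
    gcongr
    exact infDist_nonneg
  obtain ⟨z, hz, hz0⟩ := ap_fb_ne hx.1 (ball_mem_nhds x hr0)
  have hin : ∀ y ∈ closedBall z r, y ∈ Ω ∧ |u y| ≤ M := by
    intro y hy
    refine hbd y ?_
    have := dist_triangle y z x
    have h1 := mem_closedBall.1 hy
    have h2 := mem_ball.1 hz
    linarith
  have hrp : 0 < r ^ p := by positivity
  have hle := ap_core hpq hγ0 hγ1 hlp hu hr0 hM0 (fun y hy => (hin y hy).1)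
    (fun y hy => (le_abs_self _).trans (hin y hy).2) (hcst.trans_le (by
      gcongr
      exact min_le_left _ _))
  have hge := ap_core hpq hγ0 hγ1 hlm (ap_neg hu) hr0 hM0 (fun y hy => (hin y hy).1)
    (fun y hy => (neg_le_abs _).trans (hin y hy).2) (hcst.trans_le (by
      gcongr
      exact min_le_right _ _))
  exact hz0 (le_antisymm hle (by linarith))

/-- The full free boundary `Γ(u)` has vanishing `N`-dimensional Lebesgue measure
locally in `Ω`, assuming the optimal growth property with constant `C₂`. -/
theorem stmt15 (N : ℕ) (hN : 1 ≤ N) (p γ lp lm : ℝ)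
    (hp : 1 < p) (hγ0 : 0 < γ) (hγ1 : γ ≤ 1) (hγp : γ < p)
    (hlp : 0 < lp) (hlm : 0 < lm)
    (Ω : Set (EuclideanSpace ℝ (Fin N))) (hΩo : IsOpen Ω) (hΩb : Bornology.IsBounded Ω)
    (u : EuclideanSpace ℝ (Fin N) → ℝ) (hu : APLocMin N p (Fgam γ lp lm) Ω u)
    (Ω' : Set (EuclideanSpace ℝ (Fin N))) (hΩ' : Ω' ⊆ Ω)
    (d : ℝ) (hd : 0 < d) (hdist : ∀ x ∈ Ω', d ≤ Metric.infDist x (frontier Ω))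
    (ρ₀ C₂ : ℝ) (hρ₀ : 0 < ρ₀) (hC₂ : 0 < C₂)
    (hgrowth : ∀ x ∈ Ω, Metric.infDist x (apFB0 N Ω u) < ρ₀ →
      |u x| ≤ C₂ * Metric.infDist x (apFB0 N Ω u) ^ (1 + γ / (p - γ))) :
    volume (apFB N Ω u ∩ Ω') = 0 := by
  have h1 := ap_regular hΩo hu.1
  have h2 := ap_singular hp hγ0 hγ1 hγp hlp hlm hΩo hu hρ₀ hC₂ hgrowth
  refine measure_mono_null ?_ (measure_union_null h1 h2)
  rintro x ⟨hx, -⟩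
  by_cases hg : gradient u x = 0
  · exact Or.inr ⟨hx, hg⟩
  · exact Or.inl ⟨hx, hg⟩
end

section
/- Assume 0 < γ ≤ 1 (and γ < p), let u be a local minimizer of J on Ω, and let z ∈ Ω be a branching two-phase free boundary point: z ∈ ∂{x ∈ Ω : u(x) > 0} ∩ ∂{x ∈ Ω : u(x) < 0} and ∇u(z) = 0. Assume: (growth) there exist ρ₀ > 0 and C₂ > 0 with B_{ρ₀}(z) ⊆ Ω and sup_{B_r(z)} |u| ≤ C₂ r^{1+τ} for all 0 < r < ρ₀; and (interior Lipschitz estimate) there exists L > 0 such that for every 0 < r < ρ₀/2 and every y ∈ B_r(z), one has ‖∇u(x)‖ ≤ L r^τ for all x ∈ B_{r/2}(y). Then there exist c₂ ∈ (0, 1/2] and ρ₂ ∈ (0, ρ₀) such that for every 0 < r < ρ₂: c₂ · 𝓛^N(B_r(z)) ≤ 𝓛^N({u > 0} ∩ B_r(z)) ≤ (1 − c₂) · 𝓛^N(B_r(z)) and c₂ · 𝓛^N(B_r(z)) ≤ 𝓛^N({u < 0} ∩ B_r(z)) ≤ (1 − c₂) · 𝓛^N(B_r(z)). -/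
open MeasureTheory Metric Set
open scoped InnerProductSpace

lemma aux_ibp (N : ℕ) (w : EuclideanSpace ℝ (Fin N) → ℝ) (C : NNReal) (hw : LipschitzWith C w)
    (hc : HasCompactSupport w) (y : EuclideanSpace ℝ (Fin N)) :
    Integrable (fun x => fderiv ℝ w x (x - y)) ∧
      ∫ x, fderiv ℝ w x (x - y) = - (N : ℝ) * ∫ x, w x := by
  set h : Fin N → EuclideanSpace ℝ (Fin N) → ℝ := fun i x =>
    (x i - y i) * lineDeriv ℝ w x (EuclideanSpace.single i (1:ℝ)) with hh
  have hae : (fun x => fderiv ℝ w x (x - y)) =ᵐ[volume] fun x => ∑ i, h i x := by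
    filter_upwards [hw.ae_differentiableAt] with x hx
    have : x - y = ∑ i, (x i - y i) • EuclideanSpace.single i (1:ℝ) := by
      ext j
      simp [Finset.sum_apply, Pi.single_apply]
    conv_lhs => rw [this]
    rw [map_sum]
    refine Finset.sum_congr rfl fun i _ => ?_
    rw [map_smul, hh, smul_eq_mul]
    simp only [hx.lineDeriv_eq_fderiv]
  have hcont : ∀ i, Continuous (fun x : EuclideanSpace ℝ (Fin N) => x i - y i) := by
    intro i; fun_prop
  have hint : ∀ i, Integrable (h i) := by
    intro i
    rw [← integrableOn_iff_integrable_of_support_subset (s := tsupport w)]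
    · exact IntegrableOn.continuousOn_mul (hcont i).continuousOn
        ((hw.locallyIntegrable_lineDeriv _).integrableOn_isCompact hc) hc
    · intro x hx
      by_contra hxs
      apply hx
      have h0 : w =ᶠ[nhds x] fun _ => 0 := notMem_tsupport_iff_eventuallyEq.mp hxs
      simp only [hh]
      rw [h0.lineDeriv_eq]
      simp [lineDeriv]
  have hlin : ∀ i, ∫ x, h i x = - ∫ x, w x := by
    intro i
    have hf : LipschitzWith 1 (fun x : EuclideanSpace ℝ (Fin N) => x i - y i) := by
      refine LipschitzWith.of_dist_le_mul fun a b => ?_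
      simp only [NNReal.coe_one, one_mul]
      rw [Real.dist_eq, dist_eq_norm]
      have := PiLp.norm_apply_le (a - b) i
      simpa using this
    have key := hf.integral_lineDeriv_mul_eq (μ := volume) hw hc (EuclideanSpace.single i (1:ℝ))
    have h1 : ∀ x : EuclideanSpace ℝ (Fin N), lineDeriv ℝ (fun x : EuclideanSpace ℝ (Fin N) => x i - y i) x
        (EuclideanSpace.single i (1:ℝ)) = 1 := by
      intro x
      simp only [lineDeriv]
      simp
    simp only [h1, one_mul, lineDeriv_neg] at key
    rw [key, ← integral_neg]
    refine integral_congr_ae (Filter.Eventually.of_forall fun x => ?_)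
    simp only [hh]; ring
  refine ⟨(integrable_finsetSum _ fun i _ => hint i).congr hae.symm, ?_⟩
  rw [integral_congr_ae hae, integral_finsetSum _ fun i _ => hint i]
  simp [hlin]

lemma aux_ext {E : Type*} [NormedAddCommGroup E] [NormedSpace ℝ E] (y : E) (r : ℝ)
    (f : E → ℝ) (C : NNReal) (hf : LipschitzOnWith C f (closedBall y r))
    (h0 : ∀ x ∈ sphere y r, f x = 0) :
    LipschitzWith C ((closedBall y r).indicator f) := by
  have key : ∀ a ∈ closedBall y r, ∀ b ∉ closedBall y r, |f a| ≤ C * dist a b := by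
    intro a ha b hb
    have hcon : ContinuousOn (fun t : ℝ => dist (AffineMap.lineMap a b t) y) (Icc 0 1) := by
      have : Continuous (fun t : ℝ => (AffineMap.lineMap a b t : E)) := AffineMap.lineMap_continuous
      fun_prop
    have := intermediate_value_Icc (zero_le_one) hcon
    simp only [AffineMap.lineMap_apply_zero, AffineMap.lineMap_apply_one] at this
    simp only [mem_closedBall, not_le] at ha hb
    obtain ⟨t, ht, hts⟩ := this ⟨ha, hb.le⟩
    have h1 := hf.dist_le_mul a (by simpa using ha) (AffineMap.lineMap a b t) (by simp [hts])
    rw [h0 (AffineMap.lineMap a b t) (by rw [mem_sphere]; exact hts), Real.dist_eq, sub_zero, dist_left_lineMap] at h1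
    refine h1.trans ?_
    have : ‖t‖ ≤ 1 := by rw [Real.norm_eq_abs, abs_of_nonneg ht.1]; exact ht.2
    gcongr
    nlinarith [dist_nonneg (x := a) (y := b)]
  refine LipschitzWith.of_dist_le_mul fun a b => ?_
  by_cases ha : a ∈ closedBall y r <;> by_cases hb : b ∈ closedBall y r
  · simpa [ha, hb] using hf.dist_le_mul a ha b hb
  · simpa [indicator_of_mem ha, indicator_of_notMem hb] using key a ha b hb
  · rw [dist_comm, dist_comm a b]
    simpa [indicator_of_mem hb, indicator_of_notMem ha] using key b hb a ha
  · simp [indicator_of_notMem hb, indicator_of_notMem ha]; positivity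

/-- convexity inequality -/
lemma aux_conv (p q κ b U d : ℝ) (hpq : p.HolderConjugate q) (hκ : 0 < κ) (hb : 0 ≤ b)
    (hU : 0 ≤ U) (hd : d ≤ U * b - κ * q * b ^ (q - 1) * b) :
    (κ * q * b ^ (q - 1)) ^ p / p + (κ * q) ^ (p - 1) * d ≤ U ^ p / p := by
  have hq := hpq.symm.pos
  have hp1 := hpq.lt
  have hp := hpq.pos
  have hA : 0 ≤ (κ * q) ^ (p - 1) := by positivity
  set B := κ * q * b ^ (q - 1) with hB
  have hB0 : 0 ≤ B := by positivity
  have h1 : B ^ (p - 1) = (κ * q) ^ (p - 1) * b := by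
    rw [hB, Real.mul_rpow (by positivity) (by positivity), ← Real.rpow_mul hb]
    have : (q - 1) * (p - 1) = 1 := by
      have := hpq.mul_eq_add; nlinarith
    rw [this, Real.rpow_one]
  have h2 : B ^ (p - 1) * B = B ^ p := by
    conv_lhs => rw [← Real.rpow_one B]
    rw [Real.rpow_one, ← Real.rpow_add_one' hB0 (by linarith)]; congr 1; ring
  have h3 := Real.young_inequality_of_nonneg hU (Real.rpow_nonneg hB0 (p-1)) hpq
  rw [← Real.rpow_mul hB0, hpq.sub_one_mul_conj] at h3
  have h4 : B ^ p / p + B ^ p / q = B ^ p := by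
    have := hpq.inv_add_inv_eq_one
    rw [div_eq_mul_inv, div_eq_mul_inv, ← mul_add, this, mul_one]
  have h5 : (κ * q) ^ (p - 1) * d ≤ (κ * q) ^ (p - 1) * (U * b - B * b) :=
    mul_le_mul_of_nonneg_left hd hA
  have h6 : (κ * q) ^ (p - 1) * (U * b - B * b) = U * B ^ (p-1) - B ^ p := by
    rw [← h2, h1]; ring
  linarith

lemma aux_conc (γ s t M : ℝ) (h0 : 0 < γ) (h1 : γ ≤ 1) (hs : 0 ≤ s) (hst : s ≤ t) (ht : 0 < t)
    (htM : t ≤ M) : γ * M ^ (γ - 1) * (t - s) ≤ t ^ γ - s ^ γ := by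
  have hM : M ^ (γ - 1) ≤ t ^ (γ - 1) := Real.rpow_le_rpow_of_nonpos ht htM (by linarith)
  have h2 := rpow_one_add_le_one_add_mul_self (s := s / t - 1) (by
    have : 0 ≤ s / t := by positivity
    linarith) h0.le h1
  have h3 : (1 + (s / t - 1)) ^ γ = s ^ γ / t ^ γ := by
    rw [← Real.div_rpow hs ht.le]; congr 1; ring
  rw [h3, div_le_iff₀ (by positivity)] at h2
  have h4 : t ^ γ = t ^ (γ - 1) * t := by
    rw [← Real.rpow_add_one ht.ne']; congr 1; ring
  have h5 : γ * (s / t - 1) * t ^ γ = γ * t ^ (γ - 1) * (s - t) := by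
    rw [h4]; field_simp
  have h6 : γ * M ^ (γ - 1) * (t - s) ≤ γ * t ^ (γ - 1) * (t - s) := by
    have := sub_nonneg.2 hst
    gcongr
  nlinarith

lemma aux_ngrad {N : ℕ} (f : EuclideanSpace ℝ (Fin N) → ℝ) (x : EuclideanSpace ℝ (Fin N)) :
    ‖gradient f x‖ = ‖fderiv ℝ f x‖ := by
  simp [gradient]

lemma aux_core (N : ℕ) (hN : 1 ≤ N) (p q γ lp lm : ℝ) (hpq : p.HolderConjugate q)
    (hγ0 : 0 < γ) (hγ1 : γ ≤ 1)
    (hlp : 0 < lp) (hlm : 0 < lm)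
    (Ω : Set (EuclideanSpace ℝ (Fin N)))
    (u : EuclideanSpace ℝ (Fin N) → ℝ) (hu : APLocMin N p (Fgam γ lp lm) Ω u)
    (y : EuclideanSpace ℝ (Fin N)) (r M κ : ℝ) (hr : 0 < r) (hκ : 0 < κ)
    (hy : 0 < u y) (hB : closedBall y r ⊆ Ω) (hM : ∀ x ∈ closedBall y r, u x ≤ M)
    (hMκ : M ≤ κ * r ^ q) (hlt : (N : ℝ) * (κ * q) ^ (p - 1) < lp * (γ * M ^ (γ - 1))) : False := by
  obtain ⟨hud, hug, -, hmin⟩ := hu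
  have hq := hpq.symm.pos
  have hq1 := hpq.symm.lt
  have hp1 := hpq.lt
  have hp := hpq.pos
  have hcl : closure (ball y r) = closedBall y r := closure_ball _ hr.ne'
  set ψ : EuclideanSpace ℝ (Fin N) → ℝ := fun x => κ * ‖x - y‖ ^ q with hψ
  have hψ0 : ∀ x, 0 ≤ ψ x := fun x => by simp only [hψ]; positivity
  have hψd : ∀ x, HasFDerivAt ψ (κ • ((q * ‖x - y‖ ^ (q - 2)) • innerSL ℝ (x - y))) x := by
    intro x
    have h1 := (hasFDerivAt_norm_rpow (x - y) hq1).comp x ((hasFDerivAt_id x).sub_const y)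
    exact h1.const_mul κ
  have hpw : ∀ b : ℝ, 0 ≤ b → b ^ (q - 2) * b = b ^ (q - 1) := by
    intro b hb
    rw [← Real.rpow_add_one' hb (by linarith)]; congr 1; ring
  have hψn : ∀ x, ‖fderiv ℝ ψ x‖ = κ * q * ‖x - y‖ ^ (q - 1) := by
    intro x
    rw [(hψd x).fderiv, norm_smul, norm_smul, innerSL_apply_norm, ← hpw _ (norm_nonneg (x - y)),
      Real.norm_of_nonneg hκ.le, Real.norm_of_nonneg (by positivity)]
    ring
  have hψy : ∀ x, fderiv ℝ ψ x (x - y) = κ * q * ‖x - y‖ ^ (q - 1) * ‖x - y‖ := by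
    intro x
    rw [(hψd x).fderiv, ← hpw _ (norm_nonneg (x - y))]
    show κ * ((q * ‖x - y‖ ^ (q - 2)) * inner ℝ (x - y) (x - y)) = _
    rw [real_inner_self_eq_norm_sq]
    ring
  have hψdiff : Differentiable ℝ ψ := fun x => (hψd x).differentiableAt
  -- Lipschitz bounds
  have huc : ContinuousOn u (closedBall y r) := fun x hx =>
    (hud x (hB hx)).continuousAt.continuousWithinAt
  have hgc : ContinuousOn (fun x => ‖gradient u x‖) (closedBall y r) := (hug.mono hB).norm
  obtain ⟨Ku, hKu⟩ : ∃ K : NNReal, LipschitzOnWith K u (closedBall y r) := by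
    obtain ⟨C, hC⟩ := (isCompact_closedBall y r).exists_bound_of_continuousOn hgc
    refine ⟨C.toNNReal, (convex_closedBall y r).lipschitzOnWith_of_nnnorm_fderiv_le
      (fun x hx => hud x (hB hx)) fun x hx => ?_⟩
    rw [← NNReal.coe_le_coe]
    have := hC x hx
    rw [norm_norm, aux_ngrad] at this
    exact this.trans (Real.le_coe_toNNReal C)
  obtain ⟨Kψ, hKψ⟩ : ∃ K : NNReal, LipschitzOnWith K ψ (closedBall y r) := by
    refine ⟨(κ * q * r ^ (q - 1)).toNNReal, (convex_closedBall y r).lipschitzOnWith_of_nnnorm_fderiv_le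
      (fun x hx => hψdiff x) fun x hx => ?_⟩
    rw [← NNReal.coe_le_coe]
    refine le_trans ?_ (Real.le_coe_toNNReal _)
    rw [coe_nnnorm, hψn]
    have : ‖x - y‖ ≤ r := by simpa [dist_eq_norm] using hx
    have h2 : 0 ≤ q - 1 := by linarith
    gcongr
  set f : EuclideanSpace ℝ (Fin N) → ℝ := fun x => max (u x - ψ x) 0 with hf
  have hfl : LipschitzOnWith (Ku + Kψ) f (closedBall y r) := by
    refine LipschitzOnWith.of_dist_le_mul fun a ha b hb => ?_
    have h1 := hKu.dist_le_mul a ha b hb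
    have h2 := hKψ.dist_le_mul a ha b hb
    rw [Real.dist_eq] at *
    have h3 : |f a - f b| ≤ |(u a - ψ a) - (u b - ψ b)| := by
      have := abs_max_sub_max_le_max (u a - ψ a) 0 (u b - ψ b) 0
      simpa [hf] using this
    have h4 : |(u a - ψ a) - (u b - ψ b)| ≤ |u a - u b| + |ψ a - ψ b| := by
      rw [show (u a - ψ a) - (u b - ψ b) = (u a - u b) - (ψ a - ψ b) by ring]
      exact norm_sub_le (u a - u b) (ψ a - ψ b)
    push_cast
    nlinarith
  have hf0 : ∀ x ∈ sphere y r, f x = 0 := by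
    intro x hx
    have h1 := hM x (sphere_subset_closedBall hx)
    have h2 : ‖x - y‖ = r := by simpa [dist_eq_norm] using hx
    simp only [hf, hψ, h2]
    exact max_eq_right (by linarith)
  set w := (closedBall y r).indicator f with hw
  have hwl : LipschitzWith (Ku + Kψ) w := aux_ext y r f _ hfl hf0
  have hw0 : ∀ x, 0 ≤ w x := fun x => indicator_nonneg (fun x _ => le_max_right _ _) x
  have hwball : ∀ x, x ∉ ball y r → w x = 0 := by
    intro x hx
    by_cases hxs : x ∈ closedBall y r
    · rw [hw, indicator_of_mem hxs]
      apply hf0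
      simp only [mem_ball, mem_closedBall, not_lt, mem_sphere] at *
      exact le_antisymm hxs hx
    · rw [hw, indicator_of_notMem hxs]
  have hwc : HasCompactSupport w :=
    HasCompactSupport.intro (isCompact_closedBall y r) fun x hx => by
      rw [hw, indicator_of_notMem hx]
  obtain ⟨hDi, hDint⟩ := aux_ibp N w _ hwl hwc y
  have hwi : Integrable w := hwl.continuous.integrable_of_hasCompactSupport hwc
  have hwpos : 0 < ∫ x, w x := by
    refine hwl.continuous.integral_pos_of_hasCompactSupport_nonneg_nonzero hwc hw0 (x := y) ?_
    rw [hw, indicator_of_mem (mem_closedBall_self hr.le)]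
    have : ψ y = 0 := by simp [hψ, hq.ne']
    simp only [hf, this, sub_zero]
    exact (lt_max_of_lt_left hy).ne'
  have hmin0 : ∀ x, w x = 0 → fderiv ℝ w x = 0 := by
    intro x hx
    apply IsLocalMin.fderiv_eq_zero
    refine Filter.Eventually.of_forall fun t => ?_
    show w x ≤ w t
    rw [hx]; exact hw0 t
  have hDset : ∫ x in ball y r, fderiv ℝ w x (x - y) = - (N : ℝ) * ∫ x, w x := by
    rw [← hDint]
    apply setIntegral_eq_integral_of_forall_compl_eq_zero
    intro x hx
    rw [hmin0 x (hwball x hx)]; rfl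
  have hwset : ∫ x in ball y r, w x = ∫ x, w x :=
    setIntegral_eq_integral_of_forall_compl_eq_zero hwball
  -- the competitor
  set v : EuclideanSpace ℝ (Fin N) → ℝ := fun x => u x - w x with hv
  have hvl : LipschitzOnWith (Ku + (Ku + Kψ)) v (closure (ball y r)) := by
    rw [hcl]
    refine LipschitzOnWith.of_dist_le_mul fun a ha b hb => ?_
    have h1 := hKu.dist_le_mul a ha b hb
    have h2 := hwl.dist_le_mul a b
    rw [Real.dist_eq] at *
    have h4 : |v a - v b| ≤ |u a - u b| + |w a - w b| := by
      rw [show v a - v b = (u a - u b) - (w a - w b) by simp only [hv]; ring]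
      exact norm_sub_le (u a - u b) (w a - w b)
    push_cast at *
    nlinarith
  have hve : EqOn v u (sphere y r) := by
    intro x hx
    have : w x = 0 := hwball x (by simp at hx ⊢; exact hx.ge)
    simp [hv, this]
  have hm := hmin y r hr (by rw [hcl]; exact hB) v _ hvl hve
  set A := (κ * q) ^ (p - 1) with hA
  set θ := lp * (γ * M ^ (γ - 1)) with hθ
  have hFc : Continuous (Fgam γ lp lm) := by
    unfold Fgam
    have h1 : Continuous fun t : ℝ => (max t 0) ^ γ :=
      (continuous_id.max continuous_const).rpow_const fun _ => Or.inr hγ0.le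
    have h2 : Continuous fun t : ℝ => (max (-t) 0) ^ γ :=
      (continuous_neg.max continuous_const).rpow_const fun _ => Or.inr hγ0.le
    fun_prop
  have hui : IntegrableOn (fun x => ‖gradient u x‖ ^ p / p + Fgam γ lp lm (u x)) (ball y r) := by
    refine (ContinuousOn.integrableOn_compact (isCompact_closedBall y r) ?_).mono_set
      ball_subset_closedBall
    exact ((hgc.rpow_const fun _ _ => Or.inr hp.le).div_const p).add (hFc.comp_continuousOn huc)
  have hpt : ∀ᵐ x ∂(volume.restrict (ball y r)),
      ‖gradient v x‖ ^ p / p + Fgam γ lp lm (v x) ≤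
      (‖gradient u x‖ ^ p / p + Fgam γ lp lm (u x)) - (A * fderiv ℝ w x (x - y) + θ * w x) := by
    filter_upwards [ae_restrict_mem measurableSet_ball, ae_restrict_of_ae hwl.ae_differentiableAt]
      with x hx hwd
    have hxc := ball_subset_closedBall hx
    have hudx := hud x (hB hxc)
    have hdv : fderiv ℝ v x = fderiv ℝ u x - fderiv ℝ w x := fderiv_fun_sub hudx hwd
    rw [aux_ngrad, aux_ngrad, hdv]
    by_cases hwx : w x = 0
    · rw [hmin0 x hwx]
      simp [hv, hwx]
    · have hwp : 0 < w x := lt_of_le_of_ne (hw0 x) (Ne.symm hwx)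
      have hwfx : w x = f x := by rw [hw, indicator_of_mem hxc]
      have hgt : ψ x < u x := by
        by_contra hcon
        apply hwx
        rw [hwfx]
        exact max_eq_right (by linarith)
      have hwx' : w x = u x - ψ x := by
        rw [hwfx]; exact max_eq_left (by linarith)
      have hev : w =ᶠ[nhds x] fun t => u t - ψ t := by
        filter_upwards [isOpen_ball.mem_nhds hx, hψdiff.continuous.continuousAt.eventually_lt
          hudx.continuousAt hgt] with t ht htt
        rw [hw, indicator_of_mem (ball_subset_closedBall ht)]
        exact max_eq_left (by linarith)
      have hdw : fderiv ℝ w x = fderiv ℝ u x - fderiv ℝ ψ x := by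
        rw [hev.fderiv_eq]; exact fderiv_fun_sub hudx (hψdiff x)
      have e1 : fderiv ℝ u x - fderiv ℝ w x = fderiv ℝ ψ x := by rw [hdw]; abel
      have e2 : v x = ψ x := by simp only [hv, hwx']; ring
      rw [e1, e2, hψn]
      have hup : 0 < u x := (hψ0 x).trans_lt hgt
      have c1 := aux_conv p q κ ‖x - y‖ ‖fderiv ℝ u x‖ (fderiv ℝ w x (x - y)) hpq hκ
        (norm_nonneg _) (norm_nonneg _) (by
          rw [hdw, sub_apply, hψy]
          have := (le_abs_self _).trans ((fderiv ℝ u x).le_opNorm (x - y))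
          linarith)
      have c2 := aux_conc γ (ψ x) (u x) M hγ0 hγ1 (hψ0 x) hgt.le hup (hM x hxc)
      have c3 : Fgam γ lp lm (u x) = lp * u x ^ γ := by
        simp [Fgam, max_eq_left hup.le, max_eq_right (neg_nonpos.2 hup.le), Real.zero_rpow hγ0.ne']
      have c4 : Fgam γ lp lm (ψ x) = lp * ψ x ^ γ := by
        simp [Fgam, max_eq_left (hψ0 x), max_eq_right (neg_nonpos.2 (hψ0 x)), Real.zero_rpow hγ0.ne']
      rw [c3, c4, hwx']
      have c5 := mul_le_mul_of_nonneg_left c2 hlp.le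
      have c6 : θ * (u x - ψ x) = lp * (γ * M ^ (γ - 1) * (u x - ψ x)) := by rw [hθ]; ring
      rw [c6]
      linarith
  have hGi : IntegrableOn (fun x => A * fderiv ℝ w x (x - y) + θ * w x) (ball y r) :=
    ((hDi.const_mul A).add (hwi.const_mul θ)).integrableOn
  have hle := integral_mono_of_nonneg (Filter.Eventually.of_forall fun x => by
      have : 0 ≤ Fgam γ lp lm (v x) := by unfold Fgam; positivity
      show (0:ℝ) ≤ _
      positivity) (hui.sub hGi) hpt
  simp only [Pi.sub_apply] at hle
  rw [integral_sub hui hGi, integral_add (hDi.const_mul A).integrableOn (hwi.const_mul θ).integrableOn,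
    integral_const_mul, integral_const_mul, hDset, hwset] at hle
  nlinarith

lemma aux_nondeg (N : ℕ) (hN : 1 ≤ N) (p γ lp lm : ℝ)
    (hp : 1 < p) (hγ0 : 0 < γ) (hγ1 : γ ≤ 1) (hγp : γ < p)
    (hlp : 0 < lp) (hlm : 0 < lm)
    (Ω : Set (EuclideanSpace ℝ (Fin N)))
    (u : EuclideanSpace ℝ (Fin N) → ℝ) (hu : APLocMin N p (Fgam γ lp lm) Ω u) :
    ∃ c : ℝ, 0 < c ∧ ∀ (y : EuclideanSpace ℝ (Fin N)) (r : ℝ), 0 < r → 0 < u y →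
      closedBall y r ⊆ Ω → ∃ x ∈ closedBall y r, c * r ^ (1 + γ / (p - γ)) < u x := by
  have hpq : p.HolderConjugate (p.conjExponent) := Real.HolderConjugate.conjExponent hp
  set q := p.conjExponent
  have hq := hpq.symm.pos
  have hNp : (0:ℝ) < N := by exact_mod_cast hN
  have hd : 0 < p - γ := by linarith
  set β := 1 + γ / (p - γ) with hβ
  have hβp : β * (p - γ) = p := by rw [hβ]; field_simp; ring
  set T := lp * γ / (2 * (N * q ^ (p - 1))) with hT
  have hT0 : 0 < T := by positivity
  set c := T ^ (1 / (p - γ)) with hc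
  have hc0 : 0 < c := by positivity
  have hcp : c ^ (p - γ) = T := by
    rw [hc, ← Real.rpow_mul hT0.le, one_div_mul_cancel hd.ne', Real.rpow_one]
  refine ⟨c, hc0, fun y r hr hy hB => ?_⟩
  by_contra! hcon
  refine aux_core N hN p q γ lp lm hpq hγ0 hγ1 hlp hlm Ω u hu y r (c * r ^ β) (c * r ^ (β - q)) hr
    (by positivity) hy hB hcon ?_ ?_
  · rw [mul_assoc, ← Real.rpow_add hr]; simp
  · rw [Real.mul_rpow (by positivity) hq.le, Real.mul_rpow hc0.le (by positivity),
      Real.mul_rpow hc0.le (by positivity), ← Real.rpow_mul hr.le, ← Real.rpow_mul hr.le]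
    have e : (β - q) * (p - 1) = β * (γ - 1) := by
      have := hpq.mul_eq_add
      nlinarith
    rw [e]
    have e2 : c ^ (p - 1) = T * c ^ (γ - 1) := by
      rw [← hcp, ← Real.rpow_add hc0]; congr 1; ring
    rw [e2]
    have e3 : N * (T * q ^ (p - 1)) = lp * γ / 2 := by
      rw [hT]; field_simp
    have hpos : 0 < c ^ (γ - 1) * r ^ (β * (γ - 1)) := by positivity
    have e4 : N * (T * c ^ (γ - 1) * r ^ (β * (γ - 1)) * q ^ (p - 1)) =
      (lp * γ / 2) * (c ^ (γ - 1) * r ^ (β * (γ - 1))) := by rw [← e3]; ring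
    rw [e4]
    have : 0 < lp * γ := by positivity
    nlinarith

lemma aux_dens (N : ℕ) (hN : 1 ≤ N) (p γ lp lm : ℝ)
    (hp : 1 < p) (hγ0 : 0 < γ) (hγ1 : γ ≤ 1) (hγp : γ < p)
    (hlp : 0 < lp) (hlm : 0 < lm)
    (Ω : Set (EuclideanSpace ℝ (Fin N)))
    (u : EuclideanSpace ℝ (Fin N) → ℝ) (hu : APLocMin N p (Fgam γ lp lm) Ω u)
    (z : EuclideanSpace ℝ (Fin N))
    (hz1 : z ∈ closure {x ∈ Ω | 0 < u x})
    (ρ₀ L : ℝ) (hρ₀ : 0 < ρ₀) (hL : 0 < L)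
    (hball : Metric.ball z ρ₀ ⊆ Ω)
    (hlip : ∀ r : ℝ, 0 < r → r < ρ₀ / 2 → ∀ y ∈ Metric.ball z r,
      ∀ x ∈ Metric.ball y (r / 2), ‖gradient u x‖ ≤ L * r ^ (γ / (p - γ))) :
    ∃ c : ℝ, 0 < c ∧ ∀ r : ℝ, 0 < r → r < ρ₀ / 2 →
      ENNReal.ofReal c * volume (Metric.ball z r) ≤
            volume ({x ∈ Ω | 0 < u x} ∩ Metric.ball z r) := by
  obtain ⟨c, hc, hnd⟩ := aux_nondeg N hN p γ lp lm hp hγ0 hγ1 hγp hlp hlm Ω u hu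
  have hd : 0 < p - γ := by linarith
  have hτ : 0 < γ / (p - γ) := by positivity
  set τ := γ / (p - γ)
  set δ := min (1 / 4) (c * (1 / 8) ^ (1 + τ) / L) with hδ
  have hδ0 : 0 < δ := by rw [hδ]; positivity
  have hδ1 : δ ≤ 1 / 4 := min_le_left _ _
  have hδ2 : L * δ ≤ c * (1 / 8) ^ (1 + τ) := by
    have := min_le_right (1 / 4) (c * (1 / 8) ^ (1 + τ) / L)
    rw [← hδ, le_div_iff₀ hL] at this
    linarith
  refine ⟨δ ^ N, by positivity, fun r hr hrρ => ?_⟩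
  obtain ⟨y, ⟨hyΩ, hyu⟩, hyz⟩ := Metric.mem_closure_iff.1 hz1 (r / 8) (by positivity)
  rw [dist_comm] at hyz
  obtain ⟨x0, hx0, hux0⟩ := hnd y (r / 8) (by positivity) hyu (by
    intro t ht
    apply hball
    rw [mem_closedBall] at ht
    rw [mem_ball]
    linarith [dist_triangle t y z])
  rw [mem_closedBall] at hx0
  have hx0z : dist x0 z < r / 4 := by linarith [dist_triangle x0 y z]
  have hsub : ball x0 (δ * r) ⊆ {x ∈ Ω | 0 < u x} ∩ ball z r := by
    intro x hx
    rw [mem_ball] at hx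
    have hδr : δ * r ≤ r / 4 := by nlinarith
    have hball2 : ∀ t ∈ ball x0 (δ * r), t ∈ ball z r := by
      intro t ht
      rw [mem_ball] at *
      linarith [dist_triangle t x0 z]
    have hΩ2 : ball x0 (δ * r) ⊆ Ω := fun t ht =>
      hball (ball_subset_ball (by linarith) (hball2 t ht))
    refine ⟨⟨hΩ2 hx, ?_⟩, hball2 x hx⟩
    have hb : ∀ t ∈ ball x0 (δ * r), ‖fderiv ℝ u t‖ ≤ L * r ^ τ := by
      intro t ht
      rw [← aux_ngrad]
      refine (hlip (r / 2) (by positivity) (by linarith) x0 (by rw [mem_ball]; linarith) t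
        (by rw [mem_ball] at *; linarith)).trans ?_
      gcongr
      linarith
    have hmv := (convex_ball x0 (δ * r)).norm_image_sub_le_of_norm_fderiv_le
      (fun t ht => hu.1 t (hΩ2 ht)) hb (by rwa [mem_ball] : x ∈ _) (mem_ball_self (by positivity))
    rw [← dist_eq_norm x0 x, dist_comm x0 x, Real.norm_eq_abs] at hmv
    have h1 := (le_abs_self _).trans hmv
    have h2 : L * r ^ τ * dist x x0 ≤ L * r ^ τ * (δ * r) := by gcongr
    have h3 : L * r ^ τ * (δ * r) = (L * δ) * r ^ (1 + τ) := by
      rw [Real.rpow_add hr, Real.rpow_one]; ring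
    have h4 : (L * δ) * r ^ (1 + τ) ≤ c * (1 / 8) ^ (1 + τ) * r ^ (1 + τ) := by gcongr
    have h5 : c * (r / 8) ^ (1 + τ) = c * (1 / 8) ^ (1 + τ) * r ^ (1 + τ) := by
      rw [mul_assoc, ← Real.mul_rpow (by norm_num) hr.le]; congr 2; ring
    linarith
  refine le_trans (le_of_eq ?_) (measure_mono hsub)
  haveI : Nonempty (Fin N) := ⟨⟨0, hN⟩⟩
  rw [Measure.addHaar_ball_mul volume x0 hδ0.le r, finrank_euclideanSpace, Fintype.card_fin,
    Measure.addHaar_ball_center]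

lemma aux_neg (N : ℕ) (p γ lp lm : ℝ) (Ω : Set (EuclideanSpace ℝ (Fin N)))
    (u : EuclideanSpace ℝ (Fin N) → ℝ) (hu : APLocMin N p (Fgam γ lp lm) Ω u) :
    APLocMin N p (Fgam γ lm lp) Ω (fun x => - u x) := by
  have hg : ∀ f : EuclideanSpace ℝ (Fin N) → ℝ, ∀ x, gradient (fun t => - f t) x = - gradient f x := by
    intro f x
    simp [gradient, fderiv_fun_neg]
  have hF : ∀ t, Fgam γ lm lp (-t) = Fgam γ lp lm t := by
    intro t; unfold Fgam; rw [neg_neg]; ring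
  obtain ⟨h1, h2, h3, h4⟩ := hu
  refine ⟨fun x hx => (h1 x hx).neg, ?_, ?_, ?_⟩
  · simp only [hg]; exact h2.neg
  · simpa only [hg, norm_neg] using h3
  · intro z r hr hcl v K hv hve
    have := h4 z r hr hcl (fun x => - v x) K hv.neg (fun x hx => by simp [hve hx])
    simp only [hg, norm_neg, hF] at this ⊢
    refine this.trans (le_of_eq ?_)
    congr 1
    ext x
    rw [← hF, neg_neg]

/-- Upper and lower Lebesgue density estimates for both phases at a branching
two-phase free boundary point, assuming growth and interior Lipschitz estimates. -/
theorem stmt17 (N : ℕ) (hN : 1 ≤ N) (p γ lp lm : ℝ)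
    (hp : 1 < p) (hγ0 : 0 < γ) (hγ1 : γ ≤ 1) (hγp : γ < p)
    (hlp : 0 < lp) (hlm : 0 < lm)
    (Ω : Set (EuclideanSpace ℝ (Fin N))) (hΩo : IsOpen Ω) (hΩb : Bornology.IsBounded Ω)
    (u : EuclideanSpace ℝ (Fin N) → ℝ) (hu : APLocMin N p (Fgam γ lp lm) Ω u)
    (z : EuclideanSpace ℝ (Fin N)) (hzΩ : z ∈ Ω)
    (hz1 : z ∈ frontier {x ∈ Ω | 0 < u x}) (hz2 : z ∈ frontier {x ∈ Ω | u x < 0})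
    (hz3 : gradient u z = 0)
    (ρ₀ C₂ L : ℝ) (hρ₀ : 0 < ρ₀) (hC₂ : 0 < C₂) (hL : 0 < L)
    (hball : Metric.ball z ρ₀ ⊆ Ω)
    (hgrowth : ∀ r : ℝ, 0 < r → r < ρ₀ → ∀ x ∈ Metric.ball z r,
      |u x| ≤ C₂ * r ^ (1 + γ / (p - γ)))
    (hlip : ∀ r : ℝ, 0 < r → r < ρ₀ / 2 → ∀ y ∈ Metric.ball z r,
      ∀ x ∈ Metric.ball y (r / 2), ‖gradient u x‖ ≤ L * r ^ (γ / (p - γ))) :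
    ∃ c₂ ρ₂ : ℝ, 0 < c₂ ∧ c₂ ≤ 1 / 2 ∧ 0 < ρ₂ ∧ ρ₂ < ρ₀ ∧
      ∀ r : ℝ, 0 < r → r < ρ₂ →
        (ENNReal.ofReal c₂ * volume (Metric.ball z r) ≤
            volume ({x ∈ Ω | 0 < u x} ∩ Metric.ball z r) ∧
          volume ({x ∈ Ω | 0 < u x} ∩ Metric.ball z r) ≤
            ENNReal.ofReal (1 - c₂) * volume (Metric.ball z r)) ∧
        (ENNReal.ofReal c₂ * volume (Metric.ball z r) ≤
            volume ({x ∈ Ω | u x < 0} ∩ Metric.ball z r) ∧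
          volume ({x ∈ Ω | u x < 0} ∩ Metric.ball z r) ≤
            ENNReal.ofReal (1 - c₂) * volume (Metric.ball z r)) := by
  obtain ⟨a, ha, hA⟩ := aux_dens N hN p γ lp lm hp hγ0 hγ1 hγp hlp hlm Ω u hu z
    (frontier_subset_closure hz1) ρ₀ L hρ₀ hL hball hlip
  obtain ⟨b, hb, hB⟩ := aux_dens N hN p γ lm lp hp hγ0 hγ1 hγp hlm hlp Ω (fun x => - u x)
    (aux_neg N p γ lp lm Ω u hu) z
    (by simpa only [Left.neg_pos_iff] using frontier_subset_closure hz2) ρ₀ L hρ₀ hL hball (by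
      intro r hr hr2 y hy x hx
      have h := hlip r hr hr2 y hy x hx
      rw [aux_ngrad] at h ⊢
      rwa [fderiv_fun_neg, norm_neg])
  simp only [Left.neg_pos_iff] at hB
  set c := min (1 / 2) (min a b) with hc
  have hc0 : 0 < c := by rw [hc]; positivity
  have hc1 : c ≤ 1 / 2 := min_le_left _ _
  have hca : c ≤ a := (min_le_right _ _).trans (min_le_left _ _)
  have hcb : c ≤ b := (min_le_right _ _).trans (min_le_right _ _)
  have hcont : ContinuousOn u Ω := fun x hx => (hu.1 x hx).continuousAt.continuousWithinAt
  have hPo : IsOpen {x ∈ Ω | 0 < u x} := hcont.isOpen_inter_preimage hΩo isOpen_Ioi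
  have hQo : IsOpen {x ∈ Ω | u x < 0} := hcont.isOpen_inter_preimage hΩo isOpen_Iio
  refine ⟨c, ρ₀ / 2, hc0, hc1, by positivity, by linarith, fun r hr hr2 => ?_⟩
  have h1 : ENNReal.ofReal c * volume (ball z r) ≤ volume ({x ∈ Ω | 0 < u x} ∩ ball z r) :=
    le_trans (by gcongr) (hA r hr hr2)
  have h2 : ENNReal.ofReal c * volume (ball z r) ≤ volume ({x ∈ Ω | u x < 0} ∩ ball z r) :=
    le_trans (by gcongr) (hB r hr hr2)
  have hfin : volume (ball z r) ≠ ⊤ := measure_ball_lt_top.ne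
  have hdis : Disjoint ({x ∈ Ω | 0 < u x} ∩ ball z r) ({x ∈ Ω | u x < 0} ∩ ball z r) := by
    rw [Set.disjoint_left]
    rintro x ⟨⟨_, hx⟩, _⟩ ⟨⟨_, hx'⟩, _⟩
    linarith
  have hsum : volume ({x ∈ Ω | 0 < u x} ∩ ball z r) + volume ({x ∈ Ω | u x < 0} ∩ ball z r) ≤
      volume (ball z r) := by
    rw [← measure_union hdis (hQo.inter isOpen_ball).measurableSet]
    exact measure_mono (union_subset inter_subset_right inter_subset_right)
  have hfc : ENNReal.ofReal c * volume (ball z r) ≠ ⊤ :=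
    ENNReal.mul_ne_top ENNReal.ofReal_ne_top hfin
  have hup : ∀ s t : ENNReal, s + t ≤ volume (ball z r) →
      ENNReal.ofReal c * volume (ball z r) ≤ t → s ≤ ENNReal.ofReal (1 - c) * volume (ball z r) := by
    intro s t hst ht
    rw [ENNReal.ofReal_sub _ hc0.le, ENNReal.ofReal_one, ENNReal.sub_mul (fun _ _ => hfin), one_mul]
    exact ENNReal.le_sub_of_add_le_right hfc ((add_le_add_right ht s).trans hst)
  exact ⟨⟨h1, hup _ _ hsum h2⟩, ⟨h2, hup _ _ (by rwa [add_comm]) h1⟩⟩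
end
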